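/- For h = 4 there exists a group isomorphism u : ℤ/4 ⊕ ℤ/4 ⊕ ℤ/2 ⊕ ℤ/2 → ℤ⁴/A₄ℤ⁴ such that for all a, b with integer lifts x = (x₁,x₂,x₃,x₄) and y = (y₁,y₂,y₃,y₄): ∂λ(u(a),u(b)) = x₁y₁/2 + x₂y₂/2 + (x₁y₂ + x₂y₁)/4 + (x₁y₄ + x₄y₁)/2 + (x₃y₄ + x₄y₃)/2 mod ℤ and ∂θ(u(a)) = x₁²/4 + x₂²/4 + x₁x₂/4 + (x₃² + x₄² + x₄x₁ + x₄x₃)/2 mod ℤ. -/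

import Mathlib

open Matrix

noncomputable section

/-- The matrix `Q_h`: first row all `4`; in rows `2,…,h` diagonal and
above-diagonal entries are `2`, below-diagonal entries are `0`. -/
def Qmat (h : ℕ) : Matrix (Fin h) (Fin h) ℤ :=
  Matrix.of fun i j => if (i : ℕ) = 0 then 4 else if i ≤ j then 2 else 0

/-- `A_h = Q_h + Q_hᵀ`. -/
def Amat (h : ℕ) : Matrix (Fin h) (Fin h) ℤ := Qmat h + (Qmat h)ᵀ

/-- `A_h` viewed as a rational matrix. -/
def AmatQ (h : ℕ) : Matrix (Fin h) (Fin h) ℚ := (Amat h).map (Int.cast)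

/-- `Q_h` viewed as a rational matrix. -/
def QmatQ (h : ℕ) : Matrix (Fin h) (Fin h) ℚ := (Qmat h).map (Int.cast)

/-- The cokernel `ℤ^h / A_h ℤ^h`. -/
abbrev Coker (h : ℕ) := (Fin h → ℤ) ⧸ LinearMap.range ((Amat h).mulVecLin)

/-- The quotient map `ℤ^h → ℤ^h / A_h ℤ^h`. -/
def ckMk {h : ℕ} (x : Fin h → ℤ) : Coker h := Submodule.Quotient.mk x

def ratVec {h : ℕ} (x : Fin h → ℤ) : Fin h → ℚ := fun i => (x i : ℚ)

/-- The boundary linking form `∂λ` computed on representatives: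
`x ᵀ A_h⁻¹ y mod ℤ`, valued in `ℚ/ℤ`. -/
def linkR (h : ℕ) (x y : Fin h → ℤ) : AddCircle (1 : ℚ) :=
  ((ratVec x ⬝ᵥ ((AmatQ h)⁻¹ *ᵥ ratVec y) : ℚ) : AddCircle (1 : ℚ))

/-- The boundary quadratic form `∂θ` computed on representatives:
`xᵀ A_h⁻¹ Q_h A_h⁻¹ x mod ℤ`, valued in `ℚ/ℤ`. -/
def quadR (h : ℕ) (x : Fin h → ℤ) : AddCircle (1 : ℚ) :=
  ((ratVec x ⬝ᵥ (((AmatQ h)⁻¹ * QmatQ h * (AmatQ h)⁻¹) *ᵥ ratVec x) : ℚ) : AddCircle (1 : ℚ))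

/-!
Write `A = Q + Qᵀ`. The identities `A⁻¹ (x + A v) = A⁻¹ x + v` and
`(p + v)ᵀ Q (p + v) = pᵀ Q p + vᵀ A p + vᵀ Q v` show that moving a representative by `A v` changes
both forms by an integer. For `h = 4` there are unimodular integer matrices `P`, `M` with
`P * diag(4, 4, 2, 2) = A₄ * M`, so that `P` carries the lattice `diag(4, 4, 2, 2) ℤ⁴` onto `A₄ ℤ⁴`
and induces the isomorphism `u`. Both forms at `P x` are then evaluated from the
vector `A₄⁻¹ P x = M * diag(4, 4, 2, 2)⁻¹ x`.
-/

theorem addCircle_coe_add_intCast {𝕜 : Type*} [AddCommGroupWithOne 𝕜] (a : 𝕜) (n : ℤ) :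
    ((a + n : 𝕜) : AddCircle (1 : 𝕜)) = a := by
  have hn : ((n : 𝕜) : AddCircle (1 : 𝕜)) = 0 :=
    (AddCircle.coe_eq_zero_iff 1).2 ⟨n, zsmul_one n⟩
  rw [AddCircle.coe_add, hn, add_zero]

section InverseForms

variable {n R : Type*} [Fintype n] [CommRing R]

theorem add_dotProduct_mulVec_add (Q : Matrix n n R) (p v : n → R) :
    (p + v) ⬝ᵥ (Q *ᵥ (p + v)) =
      p ⬝ᵥ (Q *ᵥ p) + (v ⬝ᵥ ((Q + Qᵀ) *ᵥ p) + v ⬝ᵥ (Q *ᵥ v)) := by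
  have hcross : p ⬝ᵥ (Q *ᵥ v) = v ⬝ᵥ (Qᵀ *ᵥ p) := by
    rw [mulVec_transpose, dotProduct_mulVec, dotProduct_comm]
  simp only [mulVec_add, add_mulVec, add_dotProduct, dotProduct_add, hcross]
  ring

variable [DecidableEq n]

theorem inv_mulVec_add_mulVec {A : Matrix n n R} (hA : IsUnit A.det) (x v : n → R) :
    A⁻¹ *ᵥ (x + A *ᵥ v) = A⁻¹ *ᵥ x + v := by
  rw [mulVec_add, mulVec_mulVec, nonsing_inv_mul _ hA, one_mulVec]

theorem mulVec_dotProduct_inv_mulVec {A : Matrix n n R} (hA : IsUnit A.det) (hsymm : A.IsSymm)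
    (v y : n → R) : (A *ᵥ v) ⬝ᵥ (A⁻¹ *ᵥ y) = v ⬝ᵥ y := by
  rw [← vecMul_transpose, hsymm.eq, ← dotProduct_mulVec, mulVec_mulVec, mul_nonsing_inv _ hA,
    one_mulVec]

theorem add_mulVec_dotProduct_inv_mulVec_add_mulVec {A : Matrix n n R} (hA : IsUnit A.det)
    (hsymm : A.IsSymm) (x y v w : n → R) :
    (x + A *ᵥ v) ⬝ᵥ (A⁻¹ *ᵥ (y + A *ᵥ w)) =
      x ⬝ᵥ (A⁻¹ *ᵥ y) + (v ⬝ᵥ y + (x + A *ᵥ v) ⬝ᵥ w) := by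
  rw [inv_mulVec_add_mulVec hA, dotProduct_add, add_dotProduct,
    mulVec_dotProduct_inv_mulVec hA hsymm, add_assoc]

theorem dotProduct_inv_mul_mul_inv_mulVec {A : Matrix n n R} (hsymm : A.IsSymm)
    (Q : Matrix n n R) (x : n → R) :
    x ⬝ᵥ ((A⁻¹ * Q * A⁻¹) *ᵥ x) = (A⁻¹ *ᵥ x) ⬝ᵥ (Q *ᵥ (A⁻¹ *ᵥ x)) := by
  have hmove : A⁻¹ *ᵥ x = x ᵥ* A⁻¹ := by rw [← vecMul_transpose, hsymm.inv.eq]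
  rw [Matrix.mul_assoc, ← mulVec_mulVec, dotProduct_mulVec, ← hmove, ← mulVec_mulVec]

theorem add_mulVec_dotProduct_inv_mul_mul_inv_mulVec {Q A : Matrix n n R} (hQ : A = Q + Qᵀ)
    (hA : IsUnit A.det) (x v : n → R) :
    (x + A *ᵥ v) ⬝ᵥ ((A⁻¹ * Q * A⁻¹) *ᵥ (x + A *ᵥ v)) =
      x ⬝ᵥ ((A⁻¹ * Q * A⁻¹) *ᵥ x) + (v ⬝ᵥ x + v ⬝ᵥ (Q *ᵥ v)) := by
  have hsymm : A.IsSymm := hQ ▸ isSymm_add_transpose_self Q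
  have hcancel : A *ᵥ (A⁻¹ *ᵥ x) = x := by
    rw [mulVec_mulVec, mul_nonsing_inv _ hA, one_mulVec]
  simp only [dotProduct_inv_mul_mul_inv_mulVec hsymm]
  rw [inv_mulVec_add_mulVec hA, add_dotProduct_mulVec_add, ← hQ, hcancel]

end InverseForms

section WellDefined

variable {h : ℕ}

theorem ratVec_add (x y : Fin h → ℤ) : ratVec (x + y) = ratVec x + ratVec y := by
  ext i
  simp [ratVec]

theorem ratVec_mulVec (B : Matrix (Fin h) (Fin h) ℤ) (x : Fin h → ℤ) :
    ratVec (B *ᵥ x) = B.map Int.cast *ᵥ ratVec x :=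
  funext (RingHom.map_mulVec (Int.castRingHom ℚ) B x)

theorem ratVec_dotProduct_ratVec (x y : Fin h → ℤ) :
    ratVec x ⬝ᵥ ratVec y = ((x ⬝ᵥ y : ℤ) : ℚ) :=
  (RingHom.map_dotProduct (Int.castRingHom ℚ) x y).symm

theorem AmatQ_eq_add_transpose (h : ℕ) : AmatQ h = QmatQ h + (QmatQ h)ᵀ := by
  ext i j
  simp [AmatQ, QmatQ, Amat]

theorem AmatQ_isSymm (h : ℕ) : (AmatQ h).IsSymm :=
  AmatQ_eq_add_transpose h ▸ isSymm_add_transpose_self (QmatQ h)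

theorem ckMk_eq_ckMk_iff {x' x : Fin h → ℤ} :
    ckMk x' = ckMk x ↔ ∃ v, x' = x + Amat h *ᵥ v := by
  simp only [ckMk, Submodule.Quotient.eq, LinearMap.mem_range, mulVecLin_apply,
    eq_sub_iff_add_eq', eq_comm]

theorem linkR_congr (hA : IsUnit (AmatQ h).det) {x' x y' y : Fin h → ℤ}
    (hx : ckMk x' = ckMk x) (hy : ckMk y' = ckMk y) : linkR h x' y' = linkR h x y := by
  obtain ⟨v, rfl⟩ := ckMk_eq_ckMk_iff.1 hx
  obtain ⟨w, rfl⟩ := ckMk_eq_ckMk_iff.1 hy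
  have hshift := add_mulVec_dotProduct_inv_mulVec_add_mulVec hA (AmatQ_isSymm h)
    (ratVec x) (ratVec y) (ratVec v) (ratVec w)
  simp only [AmatQ, ← ratVec_mulVec, ← ratVec_add, ratVec_dotProduct_ratVec,
    ← Int.cast_add] at hshift
  rw [linkR, AmatQ, hshift, addCircle_coe_add_intCast, linkR, AmatQ]

theorem quadR_congr (hA : IsUnit (AmatQ h).det) {x' x : Fin h → ℤ} (hx : ckMk x' = ckMk x) :
    quadR h x' = quadR h x := by
  obtain ⟨v, rfl⟩ := ckMk_eq_ckMk_iff.1 hx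
  have hshift := add_mulVec_dotProduct_inv_mul_mul_inv_mulVec (AmatQ_eq_add_transpose h) hA
    (ratVec x) (ratVec v)
  simp only [AmatQ, QmatQ, ← ratVec_mulVec, ← ratVec_add, ratVec_dotProduct_ratVec,
    ← Int.cast_add] at hshift
  rw [quadR, AmatQ, QmatQ, hshift, addCircle_coe_add_intCast, quadR, AmatQ, QmatQ]

end WellDefined

section Presentation

variable {n R : Type*} [Fintype n] [DecidableEq n] [CommRing R]

theorem range_mulVecLin_mul_of_isUnit (A : Matrix n n R) {M : Matrix n n R} (hM : IsUnit M) :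
    LinearMap.range (A * M).mulVecLin = LinearMap.range A.mulVecLin := by
  rw [mulVecLin_mul, LinearMap.range_comp_of_range_eq_top]
  exact LinearMap.range_eq_top.2 (mulVec_surjective_iff_isUnit.2 hM)

theorem mem_range_mulVecLin_diagonal {d w : n → R} :
    w ∈ LinearMap.range (diagonal d).mulVecLin ↔ ∀ i, d i ∣ w i := by
  simp only [LinearMap.mem_range, mulVecLin_apply, funext_iff, mulVec_diagonal, dvd_def,
    eq_comm (b := w _), Classical.skolem]

/-- The isomorphism of cokernels `Rⁿ / D Rⁿ ≃ Rⁿ / A Rⁿ` induced by an invertible `P`, where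
`P * D = A * M` with `M` invertible. -/
def cokernelEquivOfMulEq {A D P M : Matrix n n R} (hP : IsUnit P) (hM : IsUnit M)
    (hPD : P * D = A * M) :
    ((n → R) ⧸ LinearMap.range D.mulVecLin) ≃ₗ[R] ((n → R) ⧸ LinearMap.range A.mulVecLin) :=
  Submodule.Quotient.equiv _ _ (toLinearEquiv' P hP.invertible) <| by
    rw [← range_mulVecLin_mul_of_isUnit A hM, ← hPD, mulVecLin_mul, LinearMap.range_comp]
    rfl

theorem cokernelEquivOfMulEq_mk {A D P M : Matrix n n R} (hP : IsUnit P) (hM : IsUnit M)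
    (hPD : P * D = A * M) (x : n → R) :
    cokernelEquivOfMulEq hP hM hPD (Submodule.Quotient.mk x) = Submodule.Quotient.mk (P *ᵥ x) :=
  rfl

/-- Coordinatewise reduction `ℤ⁴ → ℤ/a ⊕ ℤ/b ⊕ ℤ/c ⊕ ℤ/d`. -/
def reduceMod (a b c d : ℕ) : (Fin 4 → ℤ) →ₗ[ℤ] ZMod a × ZMod b × ZMod c × ZMod d where
  toFun x := (x 0, x 1, x 2, x 3)
  map_add' x y := by simp
  map_smul' k x := by simp

theorem reduceMod_surjective (a b c d : ℕ) : Function.Surjective (reduceMod a b c d) := by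
  rintro ⟨p, q, r, s⟩
  obtain ⟨p, rfl⟩ := ZMod.intCast_surjective p
  obtain ⟨q, rfl⟩ := ZMod.intCast_surjective q
  obtain ⟨r, rfl⟩ := ZMod.intCast_surjective r
  obtain ⟨s, rfl⟩ := ZMod.intCast_surjective s
  exact ⟨![p, q, r, s], rfl⟩

theorem ker_reduceMod (a b c d : ℕ) :
    LinearMap.ker (reduceMod a b c d) =
      LinearMap.range (diagonal ![(a : ℤ), b, c, d]).mulVecLin := by
  ext w
  rw [LinearMap.mem_ker, mem_range_mulVecLin_diagonal]
  simp [reduceMod, Fin.forall_fin_succ, ZMod.intCast_zmod_eq_zero_iff_dvd]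

end Presentation

section RankFour

/-- The matrix `P` whose columns represent in `ℤ⁴ / A₄ ℤ⁴` the images of the standard generators of
`ℤ/4 ⊕ ℤ/4 ⊕ ℤ/2 ⊕ ℤ/2`. -/
def generatorMatrix : Matrix (Fin 4) (Fin 4) ℤ :=
  !![0, 1, 0, 0; -1, 0, 0, -1; 0, 0, -1, 0; 0, 0, 1, 1]

/-- The matrix `M = A₄⁻¹ * P * diag(4, 4, 2, 2)`, expressing the relations among the generators
through the columns of `A₄`. -/
def relationMatrix : Matrix (Fin 4) (Fin 4) ℤ :=
  !![1, 2, 0, 0; -2, -1, 0, -1; 0, -1, -1, 0; 0, -1, 1, 1]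

theorem isUnit_generatorMatrix : IsUnit generatorMatrix := by
  rw [isUnit_iff_isUnit_det, Int.isUnit_iff]
  decide

theorem isUnit_relationMatrix : IsUnit relationMatrix := by
  rw [isUnit_iff_isUnit_det, Int.isUnit_iff]
  decide

theorem generatorMatrix_mul_diagonal :
    generatorMatrix * diagonal ![((4 : ℕ) : ℤ), (4 : ℕ), (2 : ℕ), (2 : ℕ)] =
      Amat 4 * relationMatrix := by
  decide

/-- The isomorphism `u`, sending the class of `x` to the class of `P x`. -/
def cokerFourEquiv : (ZMod 4 × ZMod 4 × ZMod 2 × ZMod 2) ≃ₗ[ℤ] Coker 4 :=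
  (LinearMap.quotKerEquivOfSurjective _ (reduceMod_surjective 4 4 2 2)).symm ≪≫ₗ
    Submodule.quotEquivOfEq _ _ (ker_reduceMod 4 4 2 2) ≪≫ₗ
    cokernelEquivOfMulEq isUnit_generatorMatrix isUnit_relationMatrix
      generatorMatrix_mul_diagonal

theorem cokerFourEquiv_intCast (x : Fin 4 → ℤ) :
    cokerFourEquiv (x 0, x 1, x 2, x 3) = ckMk (generatorMatrix *ᵥ x) := by
  have hreduce : (LinearMap.quotKerEquivOfSurjective _ (reduceMod_surjective 4 4 2 2)).symm
      (x 0, x 1, x 2, x 3) = Submodule.Quotient.mk x :=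
    (LinearEquiv.symm_apply_eq _).2 rfl
  rw [cokerFourEquiv, LinearEquiv.trans_apply, LinearEquiv.trans_apply, hreduce,
    Submodule.quotEquivOfEq_mk, cokernelEquivOfMulEq_mk, ckMk]

theorem Qmat_four : Qmat 4 = !![4, 4, 4, 4; 0, 2, 2, 2; 0, 0, 2, 2; 0, 0, 0, 2] := by
  decide

theorem Amat_four : Amat 4 = !![8, 4, 4, 4; 4, 4, 2, 2; 4, 2, 4, 2; 4, 2, 2, 4] := by
  decide

theorem isUnit_det_AmatQ_four : IsUnit (AmatQ 4).det := by
  have hdet : (AmatQ 4).det = ((Amat 4).det : ℤ) := (Int.cast_det (Amat 4)).symm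
  rw [hdet, isUnit_iff_ne_zero, Int.cast_ne_zero]
  decide

theorem ratVec_generatorMatrix_mulVec (x : Fin 4 → ℤ) :
    ratVec (generatorMatrix *ᵥ x) = ![(x 1 : ℚ), -x 0 - x 3, -x 2, x 2 + x 3] := by
  ext i
  fin_cases i <;> simp [ratVec, generatorMatrix, mulVec, dotProduct, Fin.sum_univ_four]
  ring

theorem inv_AmatQ_four_mulVec_generatorMatrix_mulVec (x : Fin 4 → ℤ) :
    (AmatQ 4)⁻¹ *ᵥ ratVec (generatorMatrix *ᵥ x) =
      ![(x 0 : ℚ) / 4 + x 1 / 2, -x 0 / 2 - x 1 / 4 - x 3 / 2, -x 1 / 4 - x 2 / 2,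
        -x 1 / 4 + x 2 / 2 + x 3 / 2] := by
  let := invertibleOfIsUnitDet (AmatQ 4) isUnit_det_AmatQ_four
  refine inv_mulVec_eq_vec ?_
  rw [ratVec_generatorMatrix_mulVec, AmatQ, Amat_four]
  ext i
  fin_cases i <;> simp [mulVec, dotProduct, Fin.sum_univ_four] <;> ring

theorem linkR_generatorMatrix_mulVec (x y : Fin 4 → ℤ) :
    linkR 4 (generatorMatrix *ᵥ x) (generatorMatrix *ᵥ y) =
      (((x 0 : ℚ) * (y 0 : ℚ) / 2 + (x 1 : ℚ) * (y 1 : ℚ) / 2 +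
        ((x 0 : ℚ) * (y 1 : ℚ) + (x 1 : ℚ) * (y 0 : ℚ)) / 4 +
        ((x 0 : ℚ) * (y 3 : ℚ) + (x 3 : ℚ) * (y 0 : ℚ)) / 2 +
        ((x 2 : ℚ) * (y 3 : ℚ) + (x 3 : ℚ) * (y 2 : ℚ)) / 2 : ℚ) : AddCircle (1 : ℚ)) := by
  rw [linkR, inv_AmatQ_four_mulVec_generatorMatrix_mulVec, ratVec_generatorMatrix_mulVec]
  refine Eq.trans (congrArg _ ?_) (addCircle_coe_add_intCast _ (x 2 * y 2 + x 3 * y 3))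
  simp only [dotProduct, Fin.sum_univ_four, cons_val, Int.cast_add, Int.cast_mul]
  ring

theorem quadR_generatorMatrix_mulVec (x : Fin 4 → ℤ) :
    quadR 4 (generatorMatrix *ᵥ x) =
      (((x 0 : ℚ) ^ 2 / 4 + (x 1 : ℚ) ^ 2 / 4 + (x 0 : ℚ) * (x 1 : ℚ) / 4 +
        ((x 2 : ℚ) ^ 2 + (x 3 : ℚ) ^ 2 + (x 3 : ℚ) * (x 0 : ℚ) + (x 3 : ℚ) * (x 2 : ℚ)) / 2 :
          ℚ) : AddCircle (1 : ℚ)) := by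
  rw [quadR, dotProduct_inv_mul_mul_inv_mulVec (AmatQ_isSymm 4),
    inv_AmatQ_four_mulVec_generatorMatrix_mulVec, QmatQ, Qmat_four]
  congr 1
  simp only [mulVec, dotProduct, Fin.sum_univ_four, map_apply, of_apply, cons_val,
    Int.cast_ofNat, Int.cast_zero]
  ring

end RankFour

/-- For h = 4 there is a group isomorphism u : ℤ/4 ⊕ ℤ/4 ⊕ ℤ/2 ⊕ ℤ/2 → ℤ⁴/A₄ℤ⁴ identifying
the boundary linking form with x₁y₁/2 + x₂y₂/2 + (x₁y₂+x₂y₁)/4 + (x₁y₄+x₄y₁)/2 + (x₃y₄+x₄y₃)/2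
mod ℤ and the boundary quadratic form with x₁²/4 + x₂²/4 + x₁x₂/4 + (x₃²+x₄²+x₄x₁+x₄x₃)/2
mod ℤ, computed from integer lifts x, y of the arguments. -/
theorem boundary_forms_h4 :
    ∃ u : (ZMod 4 × ZMod 4 × ZMod 2 × ZMod 2) ≃+ Coker 4,
      ∀ x y x' y' : Fin 4 → ℤ,
        ckMk x' = u ((x 0 : ZMod 4), (x 1 : ZMod 4), (x 2 : ZMod 2), (x 3 : ZMod 2)) →
        ckMk y' = u ((y 0 : ZMod 4), (y 1 : ZMod 4), (y 2 : ZMod 2), (y 3 : ZMod 2)) →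
        linkR 4 x' y' =
          (((x 0 : ℚ) * (y 0 : ℚ) / 2 + (x 1 : ℚ) * (y 1 : ℚ) / 2 +
            ((x 0 : ℚ) * (y 1 : ℚ) + (x 1 : ℚ) * (y 0 : ℚ)) / 4 +
            ((x 0 : ℚ) * (y 3 : ℚ) + (x 3 : ℚ) * (y 0 : ℚ)) / 2 +
            ((x 2 : ℚ) * (y 3 : ℚ) + (x 3 : ℚ) * (y 2 : ℚ)) / 2 : ℚ) : AddCircle (1 : ℚ)) ∧
        quadR 4 x' =
          (((x 0 : ℚ) ^ 2 / 4 + (x 1 : ℚ) ^ 2 / 4 + (x 0 : ℚ) * (x 1 : ℚ) / 4 +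
            ((x 2 : ℚ) ^ 2 + (x 3 : ℚ) ^ 2 + (x 3 : ℚ) * (x 0 : ℚ) + (x 3 : ℚ) * (x 2 : ℚ)) / 2 :
              ℚ) : AddCircle (1 : ℚ)) := by
  refine ⟨cokerFourEquiv.toAddEquiv, fun x y x' y' hx hy => ?_⟩
  replace hx := hx.trans (cokerFourEquiv_intCast x)
  replace hy := hy.trans (cokerFourEquiv_intCast y)
  rw [linkR_congr isUnit_det_AmatQ_four hx hy, quadR_congr isUnit_det_AmatQ_four hx]
  exact ⟨linkR_generatorMatrix_mulVec x y, quadR_generatorMatrix_mulVec x⟩
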